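/- For 6 ≤ n ≤ 8, the saturation number sat(n, K_{3,3}) is at most 2n. -/

import Mathlib

open SimpleGraph

/-- `G` contains a subgraph isomorphic to `K_{3,3}`. -/
def ContainsK33 {V : Type*} (G : SimpleGraph V) : Prop :=
  ∃ f : Fin 3 ⊕ Fin 3 → V, Function.Injective f ∧
    ∀ a b, (completeBipartiteGraph (Fin 3) (Fin 3)).Adj a b → G.Adj (f a) (f b)

/-- `G` is `K_{3,3}`-saturated. -/
def K33Saturated {V : Type*} (G : SimpleGraph V) : Prop :=
  ¬ ContainsK33 G ∧
    ∀ x y : V, x ≠ y → ¬ G.Adj x y → ContainsK33 (G ⊔ SimpleGraph.edge x y)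

/-!
Colour the vertices by nonempty proper subsets of a three-element set and join two vertices when
their colour sets are disjoint, using each singleton `r` times and each two-element set at most
once.

* The colour sets seen by the two sides of a complete bipartite subgraph are disjoint, so one side
  sees a single colour and has at most `r` vertices: there is no `K_{r+1,r+1}`.
* If `x` and `y` are distinct and not joined, there are two colours `j ≠ k` such that `x` is joined
  to all vertices coloured `{k}` and `y` to all those coloured `{j}`. Adding the edge `xy` therefore
  completes a `K_{r+1,r+1}` with sides `{x} ∪ {j}`-class and `{y} ∪ {k}`-class.
* Of two disjoint nonempty colour sets one is a singleton, and the edges can be oriented so that all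
  edges out of a vertex end in one singleton class: on `n` vertices there are at most `r n` edges.

With `r = 2` such colourings exist for `6 ≤ n ≤ 9`; for `n = 6` the graph is the octahedron.
-/

open Finset

theorem containsK33_iff_isContained {V : Type*} {G : SimpleGraph V} :
    ContainsK33 G ↔ completeBipartiteGraph (Fin 3) (Fin 3) ⊑ G :=
  ⟨fun ⟨f, hf, hadj⟩ ↦ ⟨⟨⟨f, hadj _ _⟩, hf⟩⟩,
    fun ⟨f⟩ ↦ ⟨f, f.injective, fun _ _ h ↦ f.toHom.map_adj h⟩⟩

theorem ncard_edgeSet_le_of_forall_adj {V : Type*} [Fintype V] {G : SimpleGraph V} {r : ℕ}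
    (out : V → Finset V) (hout : ∀ x, #(out x) ≤ r)
    (hG : ∀ x y, G.Adj x y → y ∈ out x ∨ x ∈ out y) :
    G.edgeSet.ncard ≤ r * Fintype.card V := by
  classical
  let oriented : Finset (Sym2 V) := univ.biUnion fun x ↦ (out x).image fun y ↦ s(x, y)
  have hsub : G.edgeSet ⊆ oriented := by
    have hmem (u v : V) (hv : v ∈ out u) : s(u, v) ∈ oriented :=
      mem_biUnion.2 ⟨u, mem_univ u, mem_image_of_mem _ hv⟩
    refine Sym2.ind fun x y hxy ↦ ?_
    obtain hy | hx := hG x y hxy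
    · exact hmem x y hy
    · exact Sym2.eq_swap ▸ hmem y x hx
  calc G.edgeSet.ncard
      ≤ #oriented := Set.ncard_coe_finset oriented ▸ Set.ncard_le_ncard hsub (finite_toSet _)
    _ ≤ #(univ : Finset V) * r :=
        card_biUnion_le_card_mul _ _ _ fun x _ ↦ card_image_le.trans (hout x)
    _ = r * Fintype.card V := by rw [card_univ, mul_comm]

theorem card_le_of_card_biUnion_le_one {V α : Type*} [Fintype V] [DecidableEq α]
    {ℓ : V → Finset α} {r : ℕ} {s : Finset V} (hℓ : ∀ x, (ℓ x).Nonempty)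
    (hr : ∀ i, #{x | ℓ x = {i}} ≤ r) (hs : #(s.biUnion ℓ) ≤ 1) : #s ≤ r := by
  obtain rfl | ⟨x, hx⟩ := s.eq_empty_or_nonempty
  · exact Nat.zero_le r
  obtain ⟨i, hi⟩ := hℓ x
  have hcolour : ∀ j ∈ s.biUnion ℓ, j = i := fun j hj ↦
    card_le_one.1 hs j hj i (mem_biUnion.2 ⟨x, hx, hi⟩)
  refine (card_le_card fun y hy ↦ ?_).trans (hr i)
  rw [mem_filter_univ, eq_singleton_iff_nonempty_unique_mem]
  exact ⟨hℓ y, fun j hj ↦ hcolour j (mem_biUnion.2 ⟨y, hy, hj⟩)⟩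

set_option synthInstance.maxSize 256 in
theorem exists_ne_notMem_of_not_disjoint {A B : Finset (Fin 3)} (hA : A ≠ univ) (hB : B ≠ univ)
    (hAB : ¬Disjoint A B) (hcard : A = B → #A = 1) :
    ∃ j k, j ≠ k ∧ k ∉ A ∧ j ∉ B ∧ A ≠ {j} ∧ B ≠ {k} := by
  -- If `i ∈ A ∩ B`, take for `j` and `k` the other two colours in a suitable order.
  decide +revert

/-- The colour of the edges out of a vertex labelled `A`: the cyclic successor of a colour in `A`
that does not lie in `A` itself, which is unique for nonempty `A ≠ univ`. -/
def nextColour (A : Finset (Fin 3)) : Fin 3 :=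
  if 0 ∈ A ∧ 1 ∉ A then 1 else if 1 ∈ A ∧ 2 ∉ A then 2 else 0

theorem eq_singleton_nextColour_of_disjoint {A B : Finset (Fin 3)} (hA : A.Nonempty)
    (hB : B.Nonempty) (hAB : Disjoint A B) : B = {nextColour A} ∨ A = {nextColour B} := by
  decide +revert

/-- The graph joining two distinct vertices when their labels, finite sets of colours, are
disjoint. Distinctness only matters for vertices with an empty label. -/
def disjointnessGraph {V α : Type*} (ℓ : V → Finset α) : SimpleGraph V where
  Adj x y := x ≠ y ∧ Disjoint (ℓ x) (ℓ y)
  symm := ⟨fun _ _ h ↦ ⟨h.1.symm, h.2.symm⟩⟩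
  loopless := ⟨fun _ h ↦ h.1 rfl⟩

namespace disjointnessGraph

variable {V : Type*}

theorem disjoint_biUnion {α : Type*} [DecidableEq α] {ℓ : V → Finset α} {s t : Finset V}
    (h : (disjointnessGraph ℓ).IsCompleteBetween s t) :
    Disjoint (s.biUnion ℓ) (t.biUnion ℓ) :=
  (disjoint_biUnion_left ..).2 fun _ hx ↦ (disjoint_biUnion_right ..).2 fun _ hy ↦ (h hx hy).2

theorem completeBipartiteGraph_isContained_sup_edge {α : Type*} [Fintype V] [DecidableEq α]
    {ℓ : V → Finset α} {r s : ℕ} {x y : V} {j k : α} (hr : #{v | ℓ v = {j}} = r)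
    (hs : #{v | ℓ v = {k}} = s) (hxy : x ≠ y) (hjk : j ≠ k) (hkx : k ∉ ℓ x) (hjy : j ∉ ℓ y)
    (hxj : ℓ x ≠ {j}) (hyk : ℓ y ≠ {k}) :
    completeBipartiteGraph (Fin (r + 1)) (Fin (s + 1)) ⊑ disjointnessGraph ℓ ⊔ edge x y := by
  classical
  refine completeBipartiteGraph_isContained_iff.2
    ⟨insert x ({v | ℓ v = {j}} : Finset V), insert y ({v | ℓ v = {k}} : Finset V), ?_, ?_, ?_⟩
  · rw [card_insert_of_notMem (by simpa using hxj), hr, Fintype.card_fin]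
  · rw [card_insert_of_notMem (by simpa using hyk), hs, Fintype.card_fin]
  · have adj_of_disjoint {u v : V} (huv : Disjoint (ℓ u) (ℓ v)) (hu : u ≠ v) :
        (disjointnessGraph ℓ ⊔ edge x y).Adj u v := .inl ⟨hu, huv⟩
    intro u hu v hv
    simp only [coe_insert, coe_filter_univ, Set.mem_insert_iff, Set.mem_ofPred_eq] at hu hv
    obtain rfl | hu := hu <;> obtain rfl | hv := hv
    · exact .inr ((edge_adj ..).2 ⟨.inl ⟨rfl, rfl⟩, hxy⟩)
    · exact adj_of_disjoint (by simpa [hv] using hkx) (by rintro rfl; simp [hv] at hkx)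
    · exact adj_of_disjoint (by simpa [hu] using hjy) (by rintro rfl; simp [hu] at hjy)
    · exact adj_of_disjoint (by simpa [hu, hv] using hjk) (by rintro rfl; simp_all)

variable [Fintype V] {ℓ : V → Finset (Fin 3)} {r : ℕ}

theorem free_completeBipartiteGraph (hℓ : ∀ x, (ℓ x).Nonempty)
    (hr : ∀ i, #{x | ℓ x = {i}} ≤ r) :
    (completeBipartiteGraph (Fin (r + 1)) (Fin (r + 1))).Free (disjointnessGraph ℓ) := by
  intro hcontained
  obtain ⟨s, t, hs, ht, hst⟩ := completeBipartiteGraph_isContained_iff.1 hcontained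
  rw [Fintype.card_fin] at hs ht
  have hcolours : #(s.biUnion ℓ) + #(t.biUnion ℓ) ≤ 3 := by
    simpa [card_union_of_disjoint (disjoint_biUnion hst)] using
      card_le_univ (s.biUnion ℓ ∪ t.biUnion ℓ)
  obtain h | h : #(s.biUnion ℓ) ≤ 1 ∨ #(t.biUnion ℓ) ≤ 1 := by lia
  · exact (card_le_of_card_biUnion_le_one hℓ hr h).not_gt (by lia)
  · exact (card_le_of_card_biUnion_le_one hℓ hr h).not_gt (by lia)

theorem completeBipartiteGraph_isContained_sup_edge_of_not_adj (hℓ : ∀ x, ℓ x ≠ univ)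
    (hinj : Set.InjOn ℓ {x | #(ℓ x) ≠ 1}) (hr : ∀ i, #{x | ℓ x = {i}} = r) {x y : V}
    (hxy : x ≠ y) (hadj : ¬(disjointnessGraph ℓ).Adj x y) :
    completeBipartiteGraph (Fin (r + 1)) (Fin (r + 1)) ⊑ disjointnessGraph ℓ ⊔ edge x y := by
  have hinter : ¬Disjoint (ℓ x) (ℓ y) := fun h ↦ hadj ⟨hxy, h⟩
  have hcard : ℓ x = ℓ y → #(ℓ x) = 1 := fun h ↦ by
    by_contra hx
    exact hxy (hinj hx (by rwa [Set.mem_ofPred_eq, ← h]) h)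
  obtain ⟨j, k, hjk, hkx, hjy, hxj, hyk⟩ :=
    exists_ne_notMem_of_not_disjoint (hℓ x) (hℓ y) hinter hcard
  exact completeBipartiteGraph_isContained_sup_edge (hr j) (hr k) hxy hjk hkx hjy hxj hyk

theorem ncard_edgeSet_le (hℓ : ∀ x, (ℓ x).Nonempty) (hr : ∀ i, #{x | ℓ x = {i}} ≤ r) :
    (disjointnessGraph ℓ).edgeSet.ncard ≤ r * Fintype.card V := by
  refine ncard_edgeSet_le_of_forall_adj (fun x ↦ {y | ℓ y = {nextColour (ℓ x)}})
    (fun x ↦ hr _) fun x y hxy ↦ ?_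
  simpa only [mem_filter_univ] using eq_singleton_nextColour_of_disjoint (hℓ x) (hℓ y) hxy.2

theorem k33Saturated (hne : ∀ x, (ℓ x).Nonempty) (huniv : ∀ x, ℓ x ≠ univ)
    (hinj : Set.InjOn ℓ {x | #(ℓ x) ≠ 1}) (hr : ∀ i, #{x | ℓ x = {i}} = 2) :
    K33Saturated (disjointnessGraph ℓ) := by
  simp only [K33Saturated, containsK33_iff_isContained]
  exact ⟨free_completeBipartiteGraph hne fun i ↦ (hr i).le,
    fun _ _ ↦ completeBipartiteGraph_isContained_sup_edge_of_not_adj huniv hinj hr⟩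

end disjointnessGraph

/-- The labels of nine vertices: each singleton twice, then each two-element set once. The graphs on
`6 ≤ n ≤ 9` vertices use the first `n` of them. -/
def colourLabel : Fin 9 → Finset (Fin 3) :=
  ![{0}, {1}, {2}, {0}, {1}, {2}, {0, 1}, {0, 2}, {1, 2}]

theorem colourLabel_nonempty (x : Fin 9) : (colourLabel x).Nonempty := by
  decide +revert

theorem colourLabel_ne_univ (x : Fin 9) : colourLabel x ≠ univ := by
  decide +revert

theorem injOn_colourLabel : Set.InjOn colourLabel {x | #(colourLabel x) ≠ 1} := by
  simp only [Set.InjOn, Set.mem_ofPred_eq]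
  decide

theorem card_colourLabel_castLE_eq_singleton {n : ℕ} (h6 : 6 ≤ n) (h9 : n ≤ 9) (i : Fin 3) :
    #{x : Fin n | colourLabel (x.castLE h9) = {i}} = 2 := by
  interval_cases n <;> decide +revert

theorem stmt_7_general (n : ℕ) (h6 : 6 ≤ n) (h9 : n ≤ 9) :
    ∃ G : SimpleGraph (Fin n), K33Saturated G ∧ G.edgeSet.ncard ≤ 2 * n := by
  let ℓ : Fin n → Finset (Fin 3) := fun x ↦ colourLabel (x.castLE h9)
  have hne : ∀ x, (ℓ x).Nonempty := fun x ↦ colourLabel_nonempty _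
  have hinj : Set.InjOn ℓ {x | #(ℓ x) ≠ 1} :=
    injOn_colourLabel.comp (Fin.castLE_injective h9).injOn fun _ hx ↦ hx
  have hcard : ∀ i, #{x | ℓ x = {i}} = 2 := card_colourLabel_castLE_eq_singleton h6 h9
  refine ⟨disjointnessGraph ℓ,
    disjointnessGraph.k33Saturated hne (fun x ↦ colourLabel_ne_univ _) hinj hcard, ?_⟩
  simpa only [Fintype.card_fin] using disjointnessGraph.ncard_edgeSet_le hne fun i ↦ (hcard i).le

theorem stmt_7 (n : ℕ) (h1 : 6 ≤ n) (h2 : n ≤ 8) :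
    ∃ G : SimpleGraph (Fin n), K33Saturated G ∧ G.edgeSet.ncard ≤ 2 * n :=
  stmt_7_general n h1 (h2.trans (by decide))
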